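/- arXiv:2509.04568 — 2 statements merged into one kernel-verified Lean document; each statement's English description precedes it below -/
import Mathlib

section
/- The growth constant of self-avoiding surfaces on the cubic lattice, i.e. of (3,2)-self-avoiding manifolds, satisfies the upper bound limsup_{n→∞} (c^SAM_{(3,2),n})^{1/n} ≤ 17.11728. -/
open Filter

/-- A `k`-face of the hypercubic lattice `ℤ^d`: an orientation set `S ⊆ {1,…,d}`
together with a base vertex `v ∈ ℤ^d`. -/
abbrev Face (d : ℕ) := Finset (Fin d) × (Fin d → ℤ)

/-- The boundary `(k-1)`-edges of a `k`-face `(S, v)`: the `(k-1)`-faces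
`(S \ {i}, v)` and `(S \ {i}, v + e_i)` for `i ∈ S`. -/
def faceEdges {d : ℕ} (f : Face d) : Finset (Face d) :=
  f.1.biUnion fun i =>
    {(f.1.erase i, f.2), (f.1.erase i, f.2 + Pi.single i 1)}

/-- Two faces are adjacent if they are distinct and share a common boundary edge. -/
def FaceAdj {d : ℕ} (f g : Face d) : Prop :=
  f ≠ g ∧ ∃ e, e ∈ faceEdges f ∧ e ∈ faceEdges g

/-- A set of faces is connected with respect to adjacency. -/
def ConnectedFaces {d : ℕ} (M : Finset (Face d)) : Prop :=
  ∀ f ∈ M, ∀ g ∈ M, Relation.ReflTransGen (fun a b => a ∈ M ∧ b ∈ M ∧ FaceAdj a b) f g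

/-- A `(d,k)`-self-avoiding manifold of `k`-area `n`: a connected set of `n` `k`-faces
such that every `(k-1)`-edge bounds at most two of its `k`-faces. -/
def IsSAM (d k n : ℕ) (M : Finset (Face d)) : Prop :=
  M.card = n ∧ (∀ f ∈ M, f.1.card = k) ∧ ConnectedFaces M ∧
    ∀ e : Face d, (M.filter fun f => e ∈ faceEdges f).card ≤ 2

/-- A closed `(d,k)`-self-avoiding manifold: every boundary edge of every face
is shared by exactly two faces. -/
def IsClosedSAM (d k n : ℕ) (M : Finset (Face d)) : Prop :=
  IsSAM d k n M ∧ ∀ f ∈ M, ∀ e ∈ faceEdges f,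
    (M.filter fun g => e ∈ faceEdges g).card = 2

/-- A `(d,k)`-fixed polyominoid of `k`-area `n`: a connected set of `n` `k`-faces. -/
def IsXD (d k n : ℕ) (M : Finset (Face d)) : Prop :=
  M.card = n ∧ (∀ f ∈ M, f.1.card = k) ∧ ConnectedFaces M

/-- Translation of a face by a lattice vector. -/
def translateFace {d : ℕ} (t : Fin d → ℤ) (f : Face d) : Face d := (f.1, f.2 + t)

/-- Two sets of faces are translation-equivalent. -/
def TransEquiv {d : ℕ} (A B : Finset (Face d)) : Prop :=
  ∃ t : Fin d → ℤ, A.image (translateFace t) = B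

/-- The number of `(d,k)`-self-avoiding manifolds of `k`-area `n`, up to translation. -/
noncomputable def samCount (d k n : ℕ) : ℕ :=
  Nat.card (Quot fun A B : {M : Finset (Face d) // IsSAM d k n M} =>
    TransEquiv A.val B.val)

/-- The number of closed `(d,k)`-self-avoiding manifolds of `k`-area `n`, up to
translation. -/
noncomputable def closedSamCount (d k n : ℕ) : ℕ :=
  Nat.card (Quot fun A B : {M : Finset (Face d) // IsClosedSAM d k n M} =>
    TransEquiv A.val B.val)

/-- The number of `(d,k)`-fixed polyominoids of `k`-area `n`, up to translation. -/
noncomputable def xdCount (d k n : ℕ) : ℕ :=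
  Nat.card (Quot fun A B : {M : Finset (Face d) // IsXD d k n M} =>
    TransEquiv A.val B.val)

/-!
Explore a surface face by face, keeping a queue of edges at which it may still continue. Settling
an edge of an explored square `f` either leaves it without a further face or attaches exactly one
new square, whose other three edges join the queue. A new square cannot contain an edge that has
already been settled, and the settled edges around the two endpoints of an edge exclude some of the
possible attachments. Remembering for each queued edge only which of three levels of such
information is available, one assigns a weight to each level so that the number of completions by
`m` further squares is at most `r ^ m` times the product of the weights in the queue.
-/

section Bounds

/-- The set `s` is finite with at most `c` elements, for a real bound `c`. -/
def HasCardLE {α : Type*} (s : Set α) (c : ℝ) : Prop := s.Finite ∧ (s.ncard : ℝ) ≤ c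

variable {α ι : Type*} {s t : Set α} {a b : ℝ}

lemma hasCardLE_empty : HasCardLE (∅ : Set α) 0 := by simp [HasCardLE]

lemma hasCardLE_singleton (x : α) : HasCardLE {x} 1 := by simp [HasCardLE]

lemma HasCardLE.mono (h : HasCardLE t b) (hst : s ⊆ t) (hba : b ≤ a) : HasCardLE s a :=
  ⟨h.1.subset hst, le_trans (mod_cast Set.ncard_le_ncard hst h.1) (h.2.trans hba)⟩

lemma HasCardLE.union (hs : HasCardLE s a) (ht : HasCardLE t b) : HasCardLE (s ∪ t) (a + b) :=
  ⟨hs.1.union ht.1, le_trans (mod_cast Set.ncard_union_le s t) (add_le_add hs.2 ht.2)⟩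

lemma HasCardLE.biUnion {I : Finset ι} {s : ι → Set α} {c : ι → ℝ}
    (h : ∀ i ∈ I, HasCardLE (s i) (c i)) : HasCardLE (⋃ i ∈ I, s i) (∑ i ∈ I, c i) :=
  ⟨I.finite_toSet.biUnion fun i hi => (h i hi).1,
    le_trans (mod_cast I.set_ncard_biUnion_le s) (Finset.sum_le_sum fun i hi => (h i hi).2)⟩

lemma limsup_rpow_one_div_le_of_le_const_mul_pow {u : ℕ → ℝ} {C r : ℝ} (hu : ∀ n, 0 ≤ u n)
    (hC : 0 < C) (hr : 0 ≤ r) (h : ∀ n ≥ 1, u n ≤ C * r ^ n) :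
    limsup (fun n : ℕ => u n ^ (1 / (n : ℝ))) atTop ≤ r := by
  have hlim : Tendsto (fun n : ℕ => C ^ (1 / (n : ℝ)) * r) atTop (nhds r) := by
    simpa using (tendsto_const_nhds.rpow tendsto_one_div_atTop_nhds_zero_nat
      (.inl hC.ne')).mul_const r
  have hle : ∀ᶠ n : ℕ in atTop, u n ^ (1 / (n : ℝ)) ≤ C ^ (1 / (n : ℝ)) * r := by
    filter_upwards [eventually_ge_atTop 1] with n hn
    calc u n ^ (1 / (n : ℝ)) ≤ (C * r ^ n) ^ (1 / (n : ℝ)) :=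
          Real.rpow_le_rpow (hu n) (h n hn) (by positivity)
      _ = C ^ (1 / (n : ℝ)) * r := by
          rw [Real.mul_rpow hC.le (by positivity), one_div,
            Real.pow_rpow_inv_natCast hr (by omega)]
  have hcobounded : IsCoboundedUnder (· ≤ ·) atTop fun n : ℕ => u n ^ (1 / (n : ℝ)) :=
    isCoboundedUnder_le_of_le atTop (x := 0) fun n => Real.rpow_nonneg (hu n) _
  exact (limsup_le_limsup hle hcobounded hlim.isBoundedUnder_le).trans_eq hlim.limsup_eq

lemma sum_ite_eq_le_card_mul_add [DecidableEq ι] (s : Finset ι) (i : ι) (hba : b ≤ a) :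
    ∑ j ∈ s, (if j = i then a else b) ≤ s.card * b + (a - b) := by
  calc ∑ j ∈ s, (if j = i then a else b) = ∑ j ∈ s, (b + if j = i then a - b else 0) :=
        Finset.sum_congr rfl fun j _ => by split_ifs <;> ring
    _ = s.card * b + if i ∈ s then a - b else 0 := by
        rw [Finset.sum_add_distrib, Finset.sum_const, nsmul_eq_mul, Finset.sum_ite_eq']
    _ ≤ s.card * b + (a - b) := by
        gcongr
        split_ifs <;> linarith

end Bounds

section Translation

variable {d k n : ℕ}

lemma translateFace_injective (t : Fin d → ℤ) : Function.Injective (translateFace t) := by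
  rintro ⟨S, u⟩ ⟨R, w⟩ h
  simpa [translateFace] using h

lemma translateFace_mem_faceEdges {t : Fin d → ℤ} {e f : Face d} :
    translateFace t e ∈ faceEdges (translateFace t f) ↔ e ∈ faceEdges f := by
  simp only [faceEdges, translateFace, Finset.mem_biUnion, Finset.mem_insert,
    Finset.mem_singleton, Prod.ext_iff, add_left_inj, add_right_comm f.2 t]

lemma mem_faceEdges_translateFace {t : Fin d → ℤ} {e f : Face d} :
    e ∈ faceEdges (translateFace t f) ↔ translateFace (-t) e ∈ faceEdges f := by
  conv_rhs => rw [← translateFace_mem_faceEdges (t := t)]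
  simp [translateFace]

lemma ConnectedFaces.image_translateFace {M : Finset (Face d)} (h : ConnectedFaces M)
    (t : Fin d → ℤ) : ConnectedFaces (M.image (translateFace t)) := by
  simp only [ConnectedFaces, Finset.forall_mem_image]
  intro f hf g hg
  refine Relation.ReflTransGen.lift (translateFace t) ?_ _ _ (h f hf g hg)
  rintro a b ⟨ha, hb, hab, e, hea, heb⟩
  exact ⟨Finset.mem_image_of_mem _ ha, Finset.mem_image_of_mem _ hb,
    (translateFace_injective t).ne hab, translateFace t e,
    translateFace_mem_faceEdges.2 hea, translateFace_mem_faceEdges.2 heb⟩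

lemma IsSAM.image_translateFace {M : Finset (Face d)} (h : IsSAM d k n M) (t : Fin d → ℤ) :
    IsSAM d k n (M.image (translateFace t)) := by
  obtain ⟨hcard, hdim, hconn, hedge⟩ := h
  refine ⟨by rw [Finset.card_image_of_injective _ (translateFace_injective t), hcard],
    Finset.forall_mem_image.2 hdim, hconn.image_translateFace t, fun e => ?_⟩
  simp only [Finset.filter_image, mem_faceEdges_translateFace]
  exact Finset.card_image_le.trans (hedge _)

/-- The `(d,k)`-SAMs of `k`-area `n` containing the face with orientation `S` based at the
origin. -/
def anchoredSAMs (k n : ℕ) (S : Finset (Fin d)) : Set (Finset (Face d)) :=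
  {M | IsSAM d k n M ∧ (S, 0) ∈ M}

lemma samCount_le_choose_mul {c : ℝ} (hn : 1 ≤ n)
    (h : ∀ S : Finset (Fin d), S.card = k → HasCardLE (anchoredSAMs k n S) c) :
    (samCount d k n : ℝ) ≤ d.choose k * c := by
  set anchored : Set (Finset (Face d)) :=
    ⋃ S ∈ (Finset.univ : Finset (Fin d)).powersetCard k, anchoredSAMs k n S
  have hSAM : ∀ M ∈ anchored, IsSAM d k n M := by
    intro M hM
    obtain ⟨S, -, hM⟩ := Set.mem_iUnion₂.1 hM
    exact hM.1
  obtain ⟨hfin, hcard⟩ : HasCardLE anchored (d.choose k * c) := by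
    have := HasCardLE.biUnion fun S (hS : S ∈ (Finset.univ : Finset (Fin d)).powersetCard k) =>
      h S (Finset.mem_powersetCard.1 hS).2
    rwa [Finset.sum_const, nsmul_eq_mul, Finset.card_powersetCard, Finset.card_fin] at this
  have := hfin.to_subtype
  let toClass (M : anchored) : Quot fun A B : {M : Finset (Face d) // IsSAM d k n M} =>
    TransEquiv A.val B.val := Quot.mk _ ⟨M, hSAM M M.2⟩
  have hsurj : Function.Surjective toClass := by
    intro q
    obtain ⟨⟨M, hM⟩, rfl⟩ := Quot.exists_rep q
    obtain ⟨f, hf⟩ : M.Nonempty := Finset.card_pos.1 (by rw [hM.1]; omega)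
    refine ⟨⟨M.image (translateFace (-f.2)), Set.mem_iUnion₂.2 ⟨f.1, ?_, ?_⟩⟩,
      (Quot.sound ⟨-f.2, rfl⟩).symm⟩
    · simpa using hM.2.1 f hf
    · exact ⟨hM.image_translateFace _, Finset.mem_image.2 ⟨f, hf, by simp [translateFace]⟩⟩
  refine le_trans ?_ hcard
  rw [← Nat.card_coe_set_eq]
  exact_mod_cast Nat.card_le_card_of_surjective toClass hsurj

end Translation

/-- A signed coordinate direction `±e_i` of `ℤ^d`, with `true` for the positive sign. -/
abbrev LatticeDir (d : ℕ) := Fin d × Bool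

namespace LatticeDir

variable {d : ℕ}

/-- The unit vector in direction `θ`. -/
def step (θ : LatticeDir d) : Fin d → ℤ :=
  if θ.2 then Pi.single θ.1 1 else -Pi.single θ.1 1

/-- The displacement from `v` to the base vertex of a face spanned at its corner `v` in direction
`θ`; faces are stored by their lowest corner. -/
def baseShift (θ : LatticeDir d) : Fin d → ℤ := if θ.2 then 0 else -Pi.single θ.1 1

/-- The opposite direction. -/
def opp (θ : LatticeDir d) : LatticeDir d := (θ.1, !θ.2)

@[simp] lemma opp_fst (θ : LatticeDir d) : θ.opp.1 = θ.1 := rfl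

lemma eq_or_eq_opp_of_fst_eq {η θ : LatticeDir d} (h : η.1 = θ.1) : η = θ ∨ η = θ.opp := by
  obtain ⟨i, _ | _⟩ := η <;> obtain ⟨j, _ | _⟩ := θ <;> simp_all [opp]

lemma card_filter_perp_add_two (η : LatticeDir d) :
    ({θ | η.1 ≠ θ.1} : Finset (LatticeDir d)).card + 2 = 2 * d := by
  have hprod : ({θ | η.1 ≠ θ.1} : Finset (LatticeDir d)) = {η.1}ᶜ ×ˢ Finset.univ := by
    ext θ
    simp [eq_comm (a := η.1)]
  have hd : 0 < d := η.1.pos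
  rw [hprod, Finset.card_product, Finset.card_compl, Finset.card_singleton,
    Fintype.card_fin, Finset.card_univ, Fintype.card_bool]
  omega

lemma step_add_baseShift_opp (θ : LatticeDir d) : θ.step + θ.opp.baseShift = θ.baseShift := by
  obtain ⟨i, _ | _⟩ := θ <;> simp [step, baseShift, opp]

end LatticeDir

section Squares

variable {d : ℕ}

/-- The unit edge leaving the vertex `v` in direction `θ`. -/
def edgeAt (v : Fin d → ℤ) (θ : LatticeDir d) : Face d := ({θ.1}, v + θ.baseShift)

/-- The unit square with a corner `v` spanned by the directions `η` and `θ`, which are meant to be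
perpendicular. -/
def squareAt (v : Fin d → ℤ) (η θ : LatticeDir d) : Face d :=
  ({η.1, θ.1}, v + η.baseShift + θ.baseShift)

lemma squareAt_comm (v : Fin d → ℤ) (η θ : LatticeDir d) : squareAt v η θ = squareAt v θ η := by
  simp only [squareAt, Finset.pair_comm, add_right_comm]

lemma squareAt_step_opp (v : Fin d → ℤ) (η θ : LatticeDir d) :
    squareAt (v + θ.step) η θ.opp = squareAt v η θ := by
  simp only [squareAt, ← θ.step_add_baseShift_opp, LatticeDir.opp_fst, add_assoc, add_left_comm]

lemma mem_faceEdges_squareAt {v : Fin d → ℤ} {η θ : LatticeDir d} (h : η.1 ≠ θ.1) {e : Face d} :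
    e ∈ faceEdges (squareAt v η θ) ↔ e = edgeAt v η ∨ e = edgeAt v θ ∨
      e = edgeAt (v + η.step) θ ∨ e = edgeAt (v + θ.step) η := by
  have erase_left : ({η.1, θ.1} : Finset (Fin d)).erase η.1 = {θ.1} :=
    Finset.erase_insert (by simpa using h)
  have erase_right : ({η.1, θ.1} : Finset (Fin d)).erase θ.1 = {η.1} := by
    rw [Finset.pair_comm, Finset.erase_insert (by simpa using h.symm)]
  simp only [faceEdges, squareAt, Finset.mem_biUnion, Finset.mem_insert, Finset.mem_singleton,
    exists_eq_or_imp, exists_eq_left, erase_left, erase_right, edgeAt]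
  obtain ⟨i, _ | _⟩ := η <;> obtain ⟨j, _ | _⟩ := θ <;>
    simp [LatticeDir.baseShift, LatticeDir.step, add_assoc, add_comm, add_left_comm] <;> tauto

lemma edgeAt_mem_faceEdges_squareAt {v : Fin d → ℤ} {η θ : LatticeDir d} (h : η.1 ≠ θ.1) :
    edgeAt v η ∈ faceEdges (squareAt v η θ) :=
  (mem_faceEdges_squareAt h).2 (.inl rfl)

lemma exists_eq_squareAt_of_edgeAt_mem {v : Fin d → ℤ} {η : LatticeDir d} {f : Face d}
    (h : edgeAt v η ∈ faceEdges f) : ∃ θ : LatticeDir d, η.1 ≠ θ.1 ∧ f = squareAt v η θ := by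
  obtain ⟨S, u⟩ := f
  simp only [faceEdges, Finset.mem_biUnion, Finset.mem_insert, Finset.mem_singleton, edgeAt,
    Prod.mk.injEq] at h
  obtain ⟨i, hi, h⟩ := h
  have hS : {η.1} = S.erase i := by tauto
  have hηi : η.1 ≠ i := Finset.ne_of_mem_erase (hS ▸ Finset.mem_singleton_self η.1)
  have hSpair : S = {η.1, i} := by rw [← Finset.insert_erase hi, ← hS, Finset.pair_comm]
  rcases h with ⟨-, hu⟩ | ⟨-, hu⟩
  · exact ⟨(i, true), hηi, by simp [squareAt, hSpair, ← hu, LatticeDir.baseShift]⟩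
  · have hbase : u = v + η.baseShift - Pi.single i 1 := eq_sub_of_add_eq hu.symm
    exact ⟨(i, false), hηi, by
      simp [squareAt, hSpair, hbase, LatticeDir.baseShift, sub_eq_add_neg]⟩

end Squares

/-- How much is known about the settled edges around an edge waiting in the queue; see
`EdgeKind.Holds`. -/
inductive EdgeKind
  | free
  | primed
  | blocked

section Kinds

variable {d : ℕ}

/-- A settled edge at `v` excludes one of the attachments at the edge `edgeAt v η` of the square
`squareAt v η ζ`. -/
def Blocked (D : Finset (Face d)) (v : Fin d → ℤ) (η ζ : LatticeDir d) : Prop :=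
  ∃ φ : LatticeDir d, φ.1 ≠ η.1 ∧ φ ≠ ζ ∧ edgeAt v φ ∈ D

/-- The information about the set `D` of settled edges that the kind of the edge `edgeAt v η` of
the explored square `squareAt v η ζ` records. -/
def EdgeKind.Holds (D : Finset (Face d)) (v : Fin d → ℤ) (η ζ : LatticeDir d) : EdgeKind → Prop
  | free => True
  -- After a straight attachment `θ = ζ.opp`, this blocks the edge `edgeAt v θ` as well.
  | primed => Blocked D v ζ η
  | blocked => Blocked D v ζ η ∧ Blocked D v η ζ

/-- The kind of the edge `edgeAt v θ` of a square `squareAt v η θ` attached to `squareAt v η ζ` at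
an edge `edgeAt v η` of the given kind. -/
def EdgeKind.child (ζ θ : LatticeDir d) : EdgeKind → EdgeKind
  | free => if θ = ζ.opp then primed else blocked
  | _ => blocked

variable {D D' : Finset (Face d)} {v : Fin d → ℤ} {η ζ θ : LatticeDir d} {k : EdgeKind}

lemma Blocked.mono (h : Blocked D v η ζ) (hD : D ⊆ D') : Blocked D' v η ζ :=
  let ⟨φ, hφη, hφζ, hφ⟩ := h
  ⟨φ, hφη, hφζ, hD hφ⟩

lemma EdgeKind.Holds.mono (h : k.Holds D v η ζ) (hD : D ⊆ D') : k.Holds D' v η ζ := by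
  cases k with
  | free => trivial
  | primed => exact Blocked.mono h hD
  | blocked => exact ⟨h.1.mono hD, h.2.mono hD⟩

lemma EdgeKind.Holds.child (h : k.Holds D v η ζ) (hηζ : η.1 ≠ ζ.1) (hθζ : θ ≠ ζ)
    (hζ : edgeAt v ζ ∈ D) : (k.child ζ θ).Holds D v θ η := by
  have hprimed : Blocked D v η θ := ⟨ζ, hηζ.symm, hθζ.symm, hζ⟩
  by_cases hstraight : θ = ζ.opp
  · have hblocked (hk : Blocked D v ζ η) : Blocked D v θ η := by
      simpa only [Blocked, hstraight, LatticeDir.opp_fst] using hk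
    cases k with
    | free => simpa only [EdgeKind.child, if_pos hstraight, EdgeKind.Holds] using hprimed
    | primed => exact ⟨hprimed, hblocked h⟩
    | blocked => exact ⟨hprimed, hblocked h.1⟩
  · have hζθ : ζ.1 ≠ θ.1 := fun h' =>
      (LatticeDir.eq_or_eq_opp_of_fst_eq h'.symm).elim hθζ hstraight
    have hchild : k.child ζ θ = .blocked := by cases k <;> simp [EdgeKind.child, hstraight]
    rw [hchild]
    exact ⟨hprimed, ζ, hζθ, fun h' => hηζ (h' ▸ rfl), hζ⟩

end Kinds

/-- An edge waiting to be settled: the edge leaving `corner` in direction `dir`, lying on the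
explored square spanned at `corner` by `dir` and `side`. -/
structure PendingEdge (d : ℕ) where
  corner : Fin d → ℤ
  dir : LatticeDir d
  side : LatticeDir d
  kind : EdgeKind

namespace PendingEdge

variable {d : ℕ}

/-- The lattice edge that is waiting. -/
def edge (p : PendingEdge d) : Face d := edgeAt p.corner p.dir

/-- The square attached at the pending edge in direction `θ`. -/
def newFace (p : PendingEdge d) (θ : LatticeDir d) : Face d := squareAt p.corner p.dir θ

/-- The recorded data is correct for the set `K` of explored squares and the set `D` of settled
edges. -/
structure IsValid (K D : Finset (Face d)) (p : PendingEdge d) : Prop where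
  perp : p.dir.1 ≠ p.side.1
  face_mem : p.newFace p.side ∈ K
  kind_holds : p.kind.Holds D p.corner p.dir p.side

/-- The directions in which a new square containing no settled edge at `p.corner` may be
attached. -/
def attachments (K D : Finset (Face d)) (p : PendingEdge d) : Finset (LatticeDir d) :=
  {θ | p.dir.1 ≠ θ.1 ∧ p.newFace θ ∉ K ∧ edgeAt p.corner θ ∉ D}

/-- The edges that join the queue with `p.newFace θ`. The edge opposite to `p.edge` comes first,
with no information recorded. -/
def children (p : PendingEdge d) (θ : LatticeDir d) : List (PendingEdge d) :=
  [⟨p.corner + θ.step, p.dir, θ.opp, .free⟩,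
   ⟨p.corner, θ, p.dir, p.kind.child p.side θ⟩,
   ⟨p.corner + p.dir.step, θ, p.dir.opp, EdgeKind.free.child p.side θ⟩]

variable {K K' D D' : Finset (Face d)} {p : PendingEdge d} {θ : LatticeDir d}

lemma IsValid.mono (h : p.IsValid K D) (hK : K ⊆ K') (hD : D ⊆ D') : p.IsValid K' D' :=
  ⟨h.perp, hK h.face_mem, h.kind_holds.mono hD⟩

lemma mem_attachments :
    θ ∈ p.attachments K D ↔ p.dir.1 ≠ θ.1 ∧ p.newFace θ ∉ K ∧ edgeAt p.corner θ ∉ D := by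
  simp [attachments]

lemma IsValid.ne_side (hp : p.IsValid K D) (hθ : θ ∈ p.attachments K D) : θ ≠ p.side := by
  rintro rfl
  exact (mem_attachments.1 hθ).2.1 hp.face_mem

lemma card_attachments_add_card_le {T : Finset (LatticeDir d)}
    (hperp : ∀ φ ∈ T, p.dir.1 ≠ φ.1) (hT : Disjoint (p.attachments K D) T) :
    (p.attachments K D).card + T.card + 2 ≤ 2 * d := by
  rw [← p.dir.card_filter_perp_add_two, ← Finset.card_union_of_disjoint hT]
  gcongr
  intro θ hθ
  rw [Finset.mem_filter_univ]
  exact (Finset.mem_union.1 hθ).elim (fun h => (mem_attachments.1 h).1) (hperp θ)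

lemma IsValid.card_attachments_add_three_le (hp : p.IsValid K D) :
    (p.attachments K D).card + 3 ≤ 2 * d := by
  have hside : Disjoint (p.attachments K D) {p.side} :=
    Finset.disjoint_singleton_right.2 fun h => hp.ne_side h rfl
  simpa using card_attachments_add_card_le (by simpa using hp.perp) hside

lemma IsValid.card_attachments_add_four_le (hp : p.IsValid K D)
    (hblocked : Blocked D p.corner p.dir p.side) : (p.attachments K D).card + 4 ≤ 2 * d := by
  obtain ⟨φ, hφdir, hφside, hφ⟩ := hblocked
  have hexcluded : Disjoint (p.attachments K D) {φ, p.side} := by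
    rw [Finset.disjoint_insert_right, Finset.disjoint_singleton_right]
    exact ⟨fun h => (mem_attachments.1 h).2.2 hφ, fun h => hp.ne_side h rfl⟩
  have := card_attachments_add_card_le
    (by simpa using And.intro hφdir.symm hp.perp) hexcluded
  rwa [Finset.card_pair hφside] at this

end PendingEdge

section Exploration

variable {d : ℕ} {K K' D D' : Finset (Face d)} {L L' : List (PendingEdge d)} {p : PendingEdge d}

/-- The lattice edges waiting in a queue. -/
def pendingEdges (L : List (PendingEdge d)) : Finset (Face d) := (L.map PendingEdge.edge).toFinset

@[simp] lemma pendingEdges_nil : pendingEdges ([] : List (PendingEdge d)) = ∅ := rfl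

@[simp] lemma pendingEdges_cons : pendingEdges (p :: L) = insert p.edge (pendingEdges L) := by
  simp [pendingEdges]

@[simp] lemma pendingEdges_append : pendingEdges (L ++ L') = pendingEdges L ∪ pendingEdges L' := by
  simp [pendingEdges]

/-- Every pending edge of the queue is valid at the time when the edges before it have been
settled. -/
def QueueValid (K : Finset (Face d)) : Finset (Face d) → List (PendingEdge d) → Prop
  | _, [] => True
  | D, p :: L => p.IsValid K D ∧ QueueValid K (insert p.edge D) L

lemma QueueValid.mono (h : QueueValid K D L) (hK : K ⊆ K') (hD : D ⊆ D') :
    QueueValid K' D' L := by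
  induction L generalizing D D' with
  | nil => trivial
  | cons p L ih => exact ⟨h.1.mono hK hD, ih h.2 (Finset.insert_subset_insert _ hD)⟩

lemma QueueValid.append (h : QueueValid K D L) (h' : QueueValid K (D ∪ pendingEdges L) L') :
    QueueValid K D (L ++ L') := by
  induction L generalizing D with
  | nil => simpa using h'
  | cons p L ih =>
    refine ⟨h.1, ih h.2 ?_⟩
    rwa [Finset.insert_union, ← Finset.union_insert, ← pendingEdges_cons]

lemma pendingEdges_children (θ : LatticeDir d) : pendingEdges (p.children θ) =
    {edgeAt (p.corner + θ.step) p.dir, edgeAt p.corner θ, edgeAt (p.corner + p.dir.step) θ} := by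
  simp [PendingEdge.children, PendingEdge.edge]

lemma PendingEdge.queueValid_children {θ : LatticeDir d} (hp : p.IsValid K D)
    (hθ : p.dir.1 ≠ θ.1) (hθside : θ ≠ p.side) (hnew : p.newFace θ ∈ K)
    (hsettled : faceEdges (p.newFace p.side) ⊆ D) : QueueValid K D (p.children θ) := by
  have hside : edgeAt p.corner p.side ∈ D :=
    hsettled ((mem_faceEdges_squareAt hp.perp).2 (by tauto))
  have hside' : edgeAt (p.corner + p.dir.step) p.side ∈ D :=
    hsettled ((mem_faceEdges_squareAt hp.perp).2 (by tauto))
  have hfar : (EdgeKind.free.child p.side θ).Holds D (p.corner + p.dir.step) θ p.dir.opp :=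
    EdgeKind.Holds.child (k := .free) trivial hp.perp hθside hside'
  refine ⟨⟨hθ, ?_, trivial⟩,
    ⟨hθ.symm, ?_, (hp.kind_holds.child hp.perp hθside hside).mono (Finset.subset_insert _ _)⟩,
    ⟨hθ.symm, ?_, hfar.mono ((Finset.subset_insert _ _).trans (Finset.subset_insert _ _))⟩,
    trivial⟩
  · simpa only [newFace, squareAt_step_opp] using hnew
  · simpa only [newFace, squareAt_comm] using hnew
  · simp only [newFace, squareAt_step_opp]
    rwa [squareAt_comm]

/-- A stage of the exploration: `K` is the set of explored squares, `D` the set of settled edges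
and `L` the queue of edges still to be settled. -/
structure IsExplorationState (K D : Finset (Face d)) (L : List (PendingEdge d)) : Prop where
  nonempty : K.Nonempty
  queueValid : QueueValid K D L
  covered : ∀ f ∈ K, faceEdges f ⊆ D ∪ pendingEdges L

namespace IsExplorationState

lemma isValid_head (h : IsExplorationState K D (p :: L)) : p.IsValid K D := h.queueValid.1

lemma settle (h : IsExplorationState K D (p :: L)) :
    IsExplorationState K (insert p.edge D) L where
  nonempty := h.nonempty
  queueValid := h.queueValid.2
  covered f hf := by simpa [Finset.insert_union] using h.covered f hf

lemma attach {θ : LatticeDir d} (h : IsExplorationState K D (p :: L))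
    (hθ : θ ∈ p.attachments K D) :
    IsExplorationState (insert (p.newFace θ) K) (insert p.edge D) (L ++ p.children θ) where
  nonempty := Finset.insert_nonempty _ _
  queueValid := by
    refine (h.settle.queueValid.mono (Finset.subset_insert _ _) subset_rfl).append ?_
    refine PendingEdge.queueValid_children ?_ (PendingEdge.mem_attachments.1 hθ).1
      (h.isValid_head.ne_side hθ) (Finset.mem_insert_self _ _)
      (h.settle.covered _ h.isValid_head.face_mem)
    exact h.isValid_head.mono (Finset.subset_insert _ _)
      ((Finset.subset_insert _ _).trans Finset.subset_union_left)
  covered := by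
    rw [Finset.forall_mem_insert, pendingEdges_append, pendingEdges_children]
    constructor
    · intro e he
      rw [PendingEdge.newFace, mem_faceEdges_squareAt (PendingEdge.mem_attachments.1 hθ).1] at he
      simp only [Finset.mem_union, Finset.mem_insert, Finset.mem_singleton, PendingEdge.edge]
      tauto
    · intro f hf
      rw [← Finset.union_assoc]
      exact (h.settle.covered f hf).trans Finset.subset_union_left

end IsExplorationState

lemma ConnectedFaces.subset_of_faceEdges {M : Finset (Face d)} (hM : ConnectedFaces M)
    (hK : K.Nonempty) (hKM : K ⊆ M)
    (hclosed : ∀ f ∈ K, ∀ g ∈ M, ∀ e ∈ faceEdges f, e ∈ faceEdges g → g ∈ K) : M ⊆ K := by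
  obtain ⟨f, hf⟩ := hK
  intro g hg
  have hpath := hM f (hKM hf) g hg
  induction hpath with
  | refl => exact hf
  | tail _ hstep ih =>
    obtain ⟨hb, hc, -, e, heb, hec⟩ := hstep
    exact hclosed _ (ih hb) _ hc e heb hec

lemma IsSAM.false_of_three_faces {k n : ℕ} {M : Finset (Face d)} {e f g h : Face d}
    (hM : IsSAM d k n M) (hf : f ∈ M) (hg : g ∈ M) (hh : h ∈ M) (hef : e ∈ faceEdges f)
    (heg : e ∈ faceEdges g) (heh : e ∈ faceEdges h) (hfg : f ≠ g) (hfh : f ≠ h) (hgh : g ≠ h) :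
    False := by
  have hsub : ({f, g, h} : Finset (Face d)) ⊆ M.filter fun f => e ∈ faceEdges f := by
    simp [Finset.insert_subset_iff, *]
  have hthree := Finset.card_eq_three.2 ⟨f, g, h, hfg, hfh, hgh, rfl⟩
  have := (Finset.card_le_card hsub).trans (hM.2.2.2 e)
  omega

/-- The surfaces that extend the explored part `K` by `m` new squares avoiding the settled
edges. -/
def completions (K D : Finset (Face d)) (m : ℕ) : Set (Finset (Face d)) :=
  {M | IsSAM d 2 (K.card + m) M ∧ K ⊆ M ∧ ∀ g ∈ M, g ∉ K → Disjoint (faceEdges g) D}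

variable {m : ℕ}

lemma completions_zero_subset : completions K D 0 ⊆ {K} := by
  rintro M ⟨hM, hKM, -⟩
  exact (Finset.eq_of_subset_of_card_le hKM hM.1.le).symm

lemma IsExplorationState.completions_nil_succ_eq_empty (h : IsExplorationState K D []) :
    completions K D (m + 1) = ∅ := by
  refine Set.eq_empty_of_forall_notMem fun M ⟨hM, hKM, hD⟩ => ?_
  have hMK : M ⊆ K := by
    refine hM.2.2.1.subset_of_faceEdges h.nonempty hKM fun f hf g hg e hef heg => ?_
    by_contra hgK
    have heD : e ∈ D := by simpa using h.covered f hf hef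
    exact Finset.disjoint_left.1 (hD g hg hgK) heg heD
  have hcard := Finset.card_le_card hMK
  rw [hM.1] at hcard
  omega

lemma mem_completions_attach {M : Finset (Face d)} {θ : LatticeDir d} (hp : p.IsValid K D)
    (hM : M ∈ completions K D (m + 1)) (hθ : θ ∈ p.attachments K D) (hθM : p.newFace θ ∈ M) :
    M ∈ completions (insert (p.newFace θ) K) (insert p.edge D) m := by
  obtain ⟨hSAM, hKM, hD⟩ := hM
  obtain ⟨hperp, hnew, -⟩ := PendingEdge.mem_attachments.1 hθ
  refine ⟨?_, Finset.insert_subset hθM hKM, fun g hg hgK => ?_⟩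
  · rwa [Finset.card_insert_of_notMem hnew, add_assoc, add_comm 1 m]
  · rw [Finset.mem_insert, not_or] at hgK
    rw [Finset.disjoint_insert_right]
    refine ⟨fun he => ?_, hD g hg hgK.2⟩
    exact hSAM.false_of_three_faces (hKM hp.face_mem) hθM hg (edgeAt_mem_faceEdges_squareAt hp.perp)
      (edgeAt_mem_faceEdges_squareAt hperp) he (ne_of_mem_of_not_mem hp.face_mem hnew)
      (ne_of_mem_of_not_mem hp.face_mem hgK.2) (Ne.symm hgK.1)

lemma completions_succ_subset (hp : p.IsValid K D) : completions K D (m + 1) ⊆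
    completions K (insert p.edge D) (m + 1) ∪
      ⋃ θ ∈ p.attachments K D, completions (insert (p.newFace θ) K) (insert p.edge D) m := by
  intro M hM
  have ⟨hSAM, hKM, hD⟩ := hM
  by_cases hnone : ∀ g ∈ M, g ∉ K → p.edge ∉ faceEdges g
  · exact .inl ⟨hSAM, hKM, fun g hg hgK =>
      Finset.disjoint_insert_right.2 ⟨hnone g hg hgK, hD g hg hgK⟩⟩
  · push Not at hnone
    obtain ⟨g, hg, hgK, hge⟩ := hnone
    obtain ⟨θ, hperp, rfl⟩ := exists_eq_squareAt_of_edgeAt_mem hge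
    have hθ : θ ∈ p.attachments K D := by
      refine PendingEdge.mem_attachments.2 ⟨hperp, hgK, Finset.disjoint_left.1 (hD _ hg hgK) ?_⟩
      rw [squareAt_comm]
      exact edgeAt_mem_faceEdges_squareAt hperp.symm
    exact .inr (Set.mem_iUnion₂.2 ⟨θ, hθ, mem_completions_attach hp hM hθ hg⟩)

end Exploration

section Weights

variable {d : ℕ} {r : ℝ} {w : EdgeKind → ℝ}

/-- The weights `w` certify the growth bound `r` for surfaces in `ℤ^d`: settling a pending edge does
not increase the weight of the queue, if every square yet to be attached has weight `r`. The three
inequalities account for at most `2 * d - 3` attachments at a free or primed edge and `2 * d - 4` at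
a blocked one, of which at most one is straight. -/
structure IsExplorationWeight (d : ℕ) (r : ℝ) (w : EdgeKind → ℝ) : Prop where
  growth_pos : 0 < r
  one_le : ∀ k, 1 ≤ w k
  blocked_le_primed : w .blocked ≤ w .primed
  free_le : r + w .free * w .primed * w .primed
    + (2 * d - 4) * (w .free * w .blocked * w .blocked) ≤ r * w .free
  primed_le : r + w .free * w .blocked * w .primed
    + (2 * d - 4) * (w .free * w .blocked * w .blocked) ≤ r * w .primed
  blocked_le : r + w .free * w .blocked * w .primed
    + (2 * d - 5) * (w .free * w .blocked * w .blocked) ≤ r * w .blocked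

/-- The weight of a queue. -/
def queueWeight (w : EdgeKind → ℝ) (L : List (PendingEdge d)) : ℝ := (L.map fun p => w p.kind).prod

variable {K D : Finset (Face d)} {p : PendingEdge d} {L : List (PendingEdge d)} {m n : ℕ}

lemma queueWeight_children (w : EdgeKind → ℝ) (p : PendingEdge d) (θ : LatticeDir d) :
    queueWeight w (p.children θ) = if θ = p.side.opp
      then w .free * w (p.kind.child p.side p.side.opp) * w .primed
      else w .free * w .blocked * w .blocked := by
  have hbent (h : θ ≠ p.side.opp) (k : EdgeKind) : k.child p.side θ = .blocked := by
    cases k <;> simp [EdgeKind.child, h]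
  split_ifs with h
  · simp [queueWeight, PendingEdge.children, EdgeKind.child, h, mul_assoc]
  · simp [queueWeight, PendingEdge.children, hbent h, mul_assoc]

namespace IsExplorationWeight

lemma pos (hw : IsExplorationWeight d r w) (k : EdgeKind) : 0 < w k :=
  zero_lt_one.trans_le (hw.one_le k)

lemma one_le_queueWeight (hw : IsExplorationWeight d r w) (L : List (PendingEdge d)) :
    1 ≤ queueWeight w L := by
  induction L with
  | nil => simp [queueWeight]
  | cons p L ih =>
    rw [queueWeight, List.map_cons, List.prod_cons]
    exact one_le_mul_of_one_le_of_one_le (hw.one_le _) ih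

lemma add_sum_children_le (hw : IsExplorationWeight d r w) (hp : p.IsValid K D) :
    r + ∑ θ ∈ p.attachments K D, queueWeight w (p.children θ) ≤ r * w p.kind := by
  have hfree := hw.pos .free
  have hblocked := hw.pos .blocked
  have hbent : w .free * w .blocked * w .blocked
      ≤ w .free * w (p.kind.child p.side p.side.opp) * w .primed := by
    have hchild : w .blocked ≤ w (p.kind.child p.side p.side.opp) := by
      cases p.kind <;> simp [EdgeKind.child, hw.blocked_le_primed]
    have := hw.blocked_le_primed
    have := hw.pos (p.kind.child p.side p.side.opp)
    gcongr
  have hsum := sum_ite_eq_le_card_mul_add (p.attachments K D) p.side.opp hbent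
  simp only [queueWeight_children]
  have hthree : ((p.attachments K D).card : ℝ) ≤ 2 * d - 3 := by
    rw [le_sub_iff_add_le]
    exact_mod_cast hp.card_attachments_add_three_le
  have hcard := mul_le_mul_of_nonneg_right hthree
    (show 0 ≤ w .free * w .blocked * w .blocked by positivity)
  have hkind := hp.kind_holds
  rcases hk : p.kind with _ | _ | _ <;> rw [hk] at hsum hkind <;>
    simp only [EdgeKind.child, if_true] at hsum ⊢
  · linarith [hw.free_le]
  · linarith [hw.primed_le]
  · have hfour : ((p.attachments K D).card : ℝ) ≤ 2 * d - 4 := by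
      rw [le_sub_iff_add_le]
      exact_mod_cast hp.card_attachments_add_four_le hkind.2
    have hcard := mul_le_mul_of_nonneg_right hfour
      (show 0 ≤ w .free * w .blocked * w .blocked by positivity)
    linarith [hw.blocked_le]

theorem hasCardLE_completions (hw : IsExplorationWeight d r w) (h : IsExplorationState K D L) :
    HasCardLE (completions K D m) (r ^ m * queueWeight w L) := by
  have hr := hw.growth_pos
  induction m generalizing K D L with
  | zero =>
    exact (hasCardLE_singleton K).mono completions_zero_subset
      (by simpa using hw.one_le_queueWeight L)
  | succ m ih_attach =>
    induction L generalizing D with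
    | nil =>
      rw [h.completions_nil_succ_eq_empty]
      have hnil := hw.one_le_queueWeight (d := d) []
      exact hasCardLE_empty.mono subset_rfl (by positivity)
    | cons p L ih_settle =>
      refine ((ih_settle h.settle).union (.biUnion fun θ hθ => ih_attach (h.attach hθ))).mono
        (completions_succ_subset h.isValid_head) ?_
      have hL := hw.one_le_queueWeight L
      have happend (θ : LatticeDir d) : queueWeight w (L ++ p.children θ)
          = queueWeight w L * queueWeight w (p.children θ) := by simp [queueWeight]
      simp only [happend]
      calc r ^ (m + 1) * queueWeight w L + ∑ θ ∈ p.attachments K D,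
            r ^ m * (queueWeight w L * queueWeight w (p.children θ))
          = r ^ m * queueWeight w L
            * (r + ∑ θ ∈ p.attachments K D, queueWeight w (p.children θ)) := by
            simp only [← Finset.mul_sum]; ring
        _ ≤ r ^ m * queueWeight w L * (r * w p.kind) := by
            gcongr
            exact hw.add_sum_children_le h.isValid_head
        _ = r ^ (m + 1) * queueWeight w (p :: L) := by
            simp only [queueWeight, List.map_cons, List.prod_cons]; ring

end IsExplorationWeight

/-- The queue at the start of the exploration from a single square: its four edges. -/
def initialQueue (v : Fin d → ℤ) (η θ : LatticeDir d) : List (PendingEdge d) :=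
  [⟨v, η, θ, .free⟩, ⟨v, θ, η, .free⟩, ⟨v + η.step, θ, η.opp, .free⟩, ⟨v + θ.step, η, θ.opp, .free⟩]

lemma isExplorationState_initialQueue (v : Fin d → ℤ) {η θ : LatticeDir d} (h : η.1 ≠ θ.1) :
    IsExplorationState {squareAt v η θ} ∅ (initialQueue v η θ) where
  nonempty := Finset.singleton_nonempty _
  queueValid := by
    refine ⟨⟨h, ?_, trivial⟩, ⟨h.symm, ?_, trivial⟩, ⟨h.symm, ?_, trivial⟩, ⟨h, ?_, trivial⟩,
      trivial⟩ <;> rw [PendingEdge.newFace, Finset.mem_singleton]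
    · rw [squareAt_comm]
    · rw [squareAt_step_opp, squareAt_comm]
    · rw [squareAt_step_opp]
  covered f hf e he := by
    rw [Finset.mem_singleton.1 hf, mem_faceEdges_squareAt h] at he
    simpa [initialQueue, PendingEdge.edge] using he

lemma IsExplorationWeight.hasCardLE_anchoredSAMs (hw : IsExplorationWeight d r w)
    {S : Finset (Fin d)} (hS : S.card = 2) (hn : 1 ≤ n) :
    HasCardLE (anchoredSAMs 2 n S) (r ^ (n - 1) * w .free ^ 4) := by
  obtain ⟨i, j, hij, rfl⟩ := Finset.card_eq_two.1 hS
  have hface : (({i, j}, 0) : Face d) = squareAt 0 (i, true) (j, true) := by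
    simp [squareAt, LatticeDir.baseShift]
  refine (hw.hasCardLE_completions (m := n - 1)
    (isExplorationState_initialQueue 0 (η := (i, true)) (θ := (j, true)) hij)).mono ?_ ?_
  · rintro M ⟨hM, hmem⟩
    rw [hface] at hmem
    refine ⟨?_, Finset.singleton_subset_iff.2 hmem, fun _ _ _ => Finset.disjoint_empty_right _⟩
    rwa [Finset.card_singleton, Nat.add_sub_cancel' hn]
  · simp [queueWeight, initialQueue, pow_succ, mul_assoc]

theorem sas_cubic_limsup_upper_bound_general (hw : IsExplorationWeight d r w) :
    limsup (fun n : ℕ => (samCount d 2 n : ℝ) ^ (1 / (n : ℝ))) atTop ≤ r := by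
  have hr := hw.growth_pos
  have hfree := hw.pos .free
  refine limsup_rpow_one_div_le_of_le_const_mul_pow (C := (d.choose 2 + 1) * (w .free ^ 4 / r))
    (fun n => by positivity) (by positivity) hr.le fun n hn => ?_
  calc (samCount d 2 n : ℝ) ≤ d.choose 2 * (r ^ (n - 1) * w .free ^ 4) :=
        samCount_le_choose_mul hn fun S hS => hw.hasCardLE_anchoredSAMs hS hn
    _ ≤ (d.choose 2 + 1) * (r ^ (n - 1) * w .free ^ 4) := by gcongr; linarith
    _ = (d.choose 2 + 1) * (w .free ^ 4 / r) * r ^ n := by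
        rw [← mul_pow_sub_one (by omega : n ≠ 0) r]
        field_simp

end Weights

/-- Weights for the cubic lattice, found numerically. -/
noncomputable def cubicWeight : EdgeKind → ℝ
  | .free => 1.632
  | .primed => 1.604
  | .blocked => 1.412

lemma isExplorationWeight_cubicWeight : IsExplorationWeight 3 17.1 cubicWeight where
  growth_pos := by norm_num
  one_le k := by cases k <;> norm_num [cubicWeight]
  blocked_le_primed := by norm_num [cubicWeight]
  free_le := by norm_num [cubicWeight]
  primed_le := by norm_num [cubicWeight]
  blocked_le := by norm_num [cubicWeight]

theorem sas_cubic_limsup_upper_bound :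
    limsup (fun n : ℕ => (samCount 3 2 n : ℝ) ^ (1 / (n : ℝ))) atTop ≤ 17.11728 :=
  (sas_cubic_limsup_upper_bound_general isExplorationWeight_cubicWeight).trans (by norm_num)
end

section
/- For every n ≥ 1, the number a_n of fixed polyominoes with n cells satisfies a_n ≤ C(3n, n−1), where C(3n, n−1) is the binomial coefficient 3n choose n−1; consequently limsup_{n→∞} (a_n)^{1/n} ≤ 27/4. -/
open Filter

/-- Two cells of the square lattice are adjacent when they differ by a signed
standard unit vector. -/
def CellAdj (a b : Fin 2 → ℤ) : Prop :=
  ∃ i : Fin 2, a - b = Pi.single i 1 ∨ a - b = Pi.single i (-1)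

/-- A set of cells is connected with respect to adjacency. -/
def ConnectedCells (P : Finset (Fin 2 → ℤ)) : Prop :=
  ∀ a ∈ P, ∀ b ∈ P, Relation.ReflTransGen (fun x y => x ∈ P ∧ y ∈ P ∧ CellAdj x y) a b

/-- A fixed polyomino with `n` cells: a connected set of `n` cells of the square
lattice. -/
def IsPolyomino (n : ℕ) (P : Finset (Fin 2 → ℤ)) : Prop :=
  P.card = n ∧ ConnectedCells P

/-- The number of fixed polyominoes with `n` cells, identified up to translation. -/
noncomputable def polyominoCount (n : ℕ) : ℕ :=
  Nat.card (Quot fun A B : {P : Finset (Fin 2 → ℤ) // IsPolyomino n P} =>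
    ∃ t : Fin 2 → ℤ, A.val.image (· + t) = B.val)

/-!
Grow a connected set in a graph of maximum degree `k + 1` from a root, maintaining a set `I` of
included and a set `E` of excluded vertices. As long as some neighbour of `I` is undecided, decide
one. Excluding it removes one undecided vertex; including it removes one and creates at most `k`
new ones, because one of its `k + 1` neighbours is already in `I`. Hence the number of undecided
vertices plus `k` times the number of vertices still to be included drops with every decision, and
Pascal's rule bounds the number of outcomes by a binomial coefficient. A polyomino is rooted at a
cell of least first coordinate: the cell to its left is excluded from the start, which leaves
three undecided neighbours. The growth rate `27 / 4` comes from comparing `(1 + 2) ^ (3n)` with the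
term `C(3n, n - 1) * 2 ^ (2n + 1)` of its binomial expansion.
-/

open scoped Finset

section BoundedDegree

variable {V : Type*} {G : SimpleGraph V}

lemma preconnected_induce_iff_reflTransGen {s : Set V} :
    (G.induce s).Preconnected ↔
      ∀ a ∈ s, ∀ b ∈ s, Relation.ReflTransGen (fun x y ↦ x ∈ s ∧ y ∈ s ∧ G.Adj x y) a b := by
  constructor
  · intro h a ha b hb
    have hab := ((G.induce s).reachable_iff_reflTransGen _ _).1 (h ⟨a, ha⟩ ⟨b, hb⟩)
    exact Relation.ReflTransGen.lift Subtype.val (fun x y hxy ↦ ⟨x.2, y.2, hxy⟩) _ _ hab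
  · rintro h ⟨a, ha⟩ ⟨b, hb⟩
    have reachable_of_path {c : V}
        (hac : Relation.ReflTransGen (fun x y ↦ x ∈ s ∧ y ∈ s ∧ G.Adj x y) a c) :
        ∀ hc : c ∈ s, (G.induce s).Reachable ⟨a, ha⟩ ⟨c, hc⟩ := by
      induction hac with
      | refl => exact fun _ ↦ .rfl
      | tail _ hxy ih =>
        obtain ⟨hx, hy, hadj⟩ := hxy
        have hstep : (G.induce s).Adj ⟨_, hx⟩ ⟨_, hy⟩ := hadj
        exact fun _ ↦ (ih hx).trans hstep.reachable
    exact reachable_of_path (h a ha b hb) hb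

lemma exists_adj_of_preconnected_induce {s t : Set V} (ht : (G.induce t).Preconnected)
    (hs : s.Nonempty) (hst : s ⊂ t) : ∃ a ∈ s, ∃ b ∈ t \ s, G.Adj a b := by
  obtain ⟨a, ha⟩ := hs
  obtain ⟨b, hbt, hbs⟩ := Set.exists_of_ssubset hst
  obtain ⟨p⟩ := ht ⟨a, hst.subset ha⟩ ⟨b, hbt⟩
  obtain ⟨d, -, hfst, hsnd⟩ := p.exists_boundary_dart (Subtype.val ⁻¹' s) ha hbs
  exact ⟨d.fst, hfst, d.snd, ⟨d.snd.2, hsnd⟩, d.adj⟩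

/-- The connected vertex sets that contain `I`, avoid `E` and have exactly `m` vertices outside
`I`: the outcomes of the growth process still possible after including `I` and excluding `E`. -/
def connectedExtensions (G : SimpleGraph V) (I E : Finset V) (m : ℕ) : Set (Finset V) :=
  {P | I ⊆ P ∧ Disjoint P E ∧ #P = #I + m ∧ (G.induce (P : Set V)).Preconnected}

lemma connectedExtensions_zero_subset (I E : Finset V) : connectedExtensions G I E 0 ⊆ {I} :=
  fun _ ⟨hIP, _, hcard, _⟩ ↦ (Finset.eq_of_subset_of_card_le hIP hcard.le).symm

variable [DecidableEq V]

lemma connectedExtensions_succ_subset {I : Finset V} (E : Finset V) {x : V} (hx : x ∉ I) (m : ℕ) :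
    connectedExtensions G I E (m + 1) ⊆
      connectedExtensions G (insert x I) E m ∪ connectedExtensions G I (insert x E) (m + 1) := by
  rintro P ⟨hIP, hPE, hcard, hconn⟩
  by_cases hxP : x ∈ P
  · refine .inl ⟨Finset.insert_subset hxP hIP, hPE, ?_, hconn⟩
    rw [hcard, Finset.card_insert_of_notMem hx]
    omega
  · exact .inr ⟨hIP, Finset.disjoint_insert_right.2 ⟨hxP, hPE⟩, hcard, hconn⟩

variable [G.LocallyFinite]

variable (G) in
/-- The undecided vertices of the growth process: the neighbours of `I` that are neither included
(in `I`) nor excluded (in `E`). -/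
def undecided (I E : Finset V) : Finset V :=
  I.biUnion (fun v ↦ G.neighborFinset v) \ (I ∪ E)

lemma mem_undecided {I E : Finset V} {x : V} :
    x ∈ undecided G I E ↔ (∃ a ∈ I, G.Adj a x) ∧ x ∉ I ∧ x ∉ E := by
  simp [undecided]

lemma card_undecided_insert_right_lt {I E : Finset V} {x : V} (hx : x ∈ undecided G I E) :
    #(undecided G I (insert x E)) < #(undecided G I E) := by
  refine Finset.card_lt_card (Finset.ssubset_iff_of_subset ?_ |>.2 ⟨x, hx, ?_⟩)
  · intro y
    simp only [mem_undecided, Finset.mem_insert]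
    tauto
  · simp [mem_undecided]

lemma undecided_insert_left_subset {I : Finset V} (E : Finset V) {a : V} (ha : a ∈ I) (x : V) :
    undecided G (insert x I) E ⊆
      (undecided G I E).erase x ∪ (G.neighborFinset x).erase a := by
  intro y hy
  obtain ⟨⟨b, hb, hby⟩, hyI, hyE⟩ := mem_undecided.1 hy
  rw [Finset.mem_insert, not_or] at hyI
  rw [Finset.mem_union, Finset.mem_erase, Finset.mem_erase, SimpleGraph.mem_neighborFinset]
  rcases Finset.mem_insert.1 hb with rfl | hb
  · exact .inr ⟨fun hya ↦ hyI.2 (hya ▸ ha), hby⟩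
  · exact .inl ⟨hyI.1, mem_undecided.2 ⟨⟨b, hb, hby⟩, hyI.2, hyE⟩⟩

lemma card_undecided_insert_left_lt {I E : Finset V} {x : V} (hx : x ∈ undecided G I E) :
    #(undecided G (insert x I) E) + 1 < #(undecided G I E) + G.degree x := by
  obtain ⟨⟨a, ha, hax⟩, -, -⟩ := mem_undecided.1 hx
  have hle := (Finset.card_le_card (undecided_insert_left_subset (G := G) E ha x)).trans
    (Finset.card_union_le _ _)
  have hundecided := Finset.card_erase_add_one hx
  have hneighbor := Finset.card_erase_add_one ((G.mem_neighborFinset x a).2 hax.symm)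
  rw [G.card_neighborFinset_eq_degree] at hneighbor
  omega

lemma connectedExtensions_succ_eq_empty {I E : Finset V} (hI : I.Nonempty)
    (hIE : undecided G I E = ∅) (m : ℕ) : connectedExtensions G I E (m + 1) = ∅ := by
  refine Set.eq_empty_of_forall_notMem fun P ⟨hIP, hPE, hcard, hconn⟩ ↦ ?_
  have hssubset : I ⊂ P := hIP.ssubset_of_ne (by rintro rfl; omega)
  obtain ⟨a, ha, b, ⟨hbP, hbI⟩, hab⟩ :=
    exists_adj_of_preconnected_induce hconn hI (Finset.coe_ssubset.2 hssubset)
  have hb : b ∈ undecided G I E :=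
    mem_undecided.2 ⟨⟨a, ha, hab⟩, hbI, Finset.disjoint_left.1 hPE hbP⟩
  simp [hIE] at hb

theorem encard_connectedExtensions_le {k : ℕ} (hG : ∀ v, G.degree v ≤ k + 1) {L m : ℕ}
    {I E : Finset V} (hI : I.Nonempty) (hL : #(undecided G I E) + k * m ≤ L) :
    (connectedExtensions G I E m).encard ≤ L.choose m := by
  induction L generalizing m I E with
  | zero =>
    cases m with
    | zero => simpa using Set.encard_le_encard (connectedExtensions_zero_subset (G := G) I E)
    | succ m =>
      have hIE : undecided G I E = ∅ := by rw [← Finset.card_eq_zero]; omega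
      simp [connectedExtensions_succ_eq_empty hI hIE]
  | succ L ih =>
    rcases m with _ | m
    · simpa using Set.encard_le_encard (connectedExtensions_zero_subset (G := G) I E)
    obtain hIE | ⟨x, hx⟩ := (undecided G I E).eq_empty_or_nonempty
    · simp [connectedExtensions_succ_eq_empty hI hIE]
    have hxI : x ∉ I := (mem_undecided.1 hx).2.1
    have hexclude := card_undecided_insert_right_lt hx
    have hinclude := card_undecided_insert_left_lt hx
    have hdegree := hG x
    rw [mul_add_one] at hL
    calc (connectedExtensions G I E (m + 1)).encard
        ≤ (connectedExtensions G (insert x I) E m).encard +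
            (connectedExtensions G I (insert x E) (m + 1)).encard :=
          (Set.encard_le_encard (connectedExtensions_succ_subset E hxI m)).trans
            (Set.encard_union_le _ _)
      _ ≤ L.choose m + L.choose (m + 1) := by
          refine add_le_add (ih (Finset.insert_nonempty x I) ?_) (ih hI ?_)
          · omega
          · rw [mul_add_one]
            omega
      _ = (L + 1).choose (m + 1) := by rw [Nat.choose_succ_succ']; norm_cast

lemma card_undecided_singleton_lt {v w : V} (hvw : G.Adj v w) :
    #(undecided G {v} {w}) < G.degree v := by
  rw [← G.card_neighborFinset_eq_degree]
  refine Finset.card_lt_card (Finset.ssubset_iff_of_subset ?_ |>.2 ⟨w, by simpa, ?_⟩)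
  · intro x
    simp +contextual [mem_undecided]
  · simp [mem_undecided]

end BoundedDegree

theorem encard_connectedExtensions_singleton_le {V : Type*} {G : SimpleGraph V} [G.LocallyFinite]
    {k : ℕ} (hG : ∀ v, G.degree v ≤ k + 1) {v w : V} (hvw : G.Adj v w) (m : ℕ) :
    (connectedExtensions G {v} {w} m).encard ≤ (k * (m + 1)).choose m := by
  classical
  refine encard_connectedExtensions_le hG (Finset.singleton_nonempty v) ?_
  have hundecided := card_undecided_singleton_lt hvw
  have hdegree := hG v
  rw [mul_add_one]
  omega

section SquareLattice

lemma CellAdj.symm {a b : Fin 2 → ℤ} (h : CellAdj a b) : CellAdj b a := by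
  obtain ⟨i, h | h⟩ := h
  · exact ⟨i, .inr (by rw [← neg_sub, h, Pi.single_neg])⟩
  · exact ⟨i, .inl (by rw [← neg_sub, h, Pi.single_neg, neg_neg])⟩

lemma not_cellAdj_self (a : Fin 2 → ℤ) : ¬ CellAdj a a := by
  simp [CellAdj, eq_comm]

lemma CellAdj.add_right {a b : Fin 2 → ℤ} (h : CellAdj a b) (t : Fin 2 → ℤ) :
    CellAdj (a + t) (b + t) := by
  simpa only [CellAdj, add_sub_add_right_eq_sub] using h

/-- The square lattice as a graph on its cells. -/
def cellGraph : SimpleGraph (Fin 2 → ℤ) where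
  Adj := CellAdj
  symm := ⟨fun _ _ ↦ CellAdj.symm⟩
  loopless := ⟨not_cellAdj_self⟩

/-- The four neighbours of a cell. -/
def cellNeighbors (a : Fin 2 → ℤ) : Finset (Fin 2 → ℤ) :=
  {a - Pi.single 0 1, a - Pi.single 0 (-1), a - Pi.single 1 1, a - Pi.single 1 (-1)}

lemma mem_cellNeighbors {a b : Fin 2 → ℤ} : b ∈ cellNeighbors a ↔ cellGraph.Adj a b := by
  have sub_eq_iff (e : Fin 2 → ℤ) : a - b = e ↔ b = a - e := by
    rw [sub_eq_iff_eq_add, eq_sub_iff_add_eq', eq_comm]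
  simp only [cellNeighbors, cellGraph, CellAdj, Fin.exists_fin_two, sub_eq_iff,
    Finset.mem_insert, Finset.mem_singleton, or_assoc]

instance : cellGraph.LocallyFinite :=
  fun a ↦ Fintype.ofFinset (cellNeighbors a) fun _ ↦ mem_cellNeighbors

lemma cellGraph_degree_le (a : Fin 2 → ℤ) : cellGraph.degree a ≤ 4 := by
  have hneighbor : cellGraph.neighborFinset a = cellNeighbors a := by
    ext b
    rw [SimpleGraph.mem_neighborFinset, mem_cellNeighbors]
  rw [← cellGraph.card_neighborFinset_eq_degree, hneighbor]
  exact Finset.card_le_four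

lemma connectedCells_iff_preconnected_induce {P : Finset (Fin 2 → ℤ)} :
    ConnectedCells P ↔ (cellGraph.induce (P : Set (Fin 2 → ℤ))).Preconnected :=
  (preconnected_induce_iff_reflTransGen (G := cellGraph) (s := (P : Set (Fin 2 → ℤ)))).symm

lemma ConnectedCells.image_add_right {P : Finset (Fin 2 → ℤ)} (hP : ConnectedCells P)
    (t : Fin 2 → ℤ) : ConnectedCells (P.image (· + t)) := by
  intro _ haP _ hbP
  obtain ⟨a, ha, rfl⟩ := Finset.mem_image.1 haP
  obtain ⟨b, hb, rfl⟩ := Finset.mem_image.1 hbP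
  refine Relation.ReflTransGen.lift (· + t) ?_ _ _ (hP a ha b hb)
  rintro x y ⟨hx, hy, hxy⟩
  exact ⟨Finset.mem_image_of_mem _ hx, Finset.mem_image_of_mem _ hy, hxy.add_right t⟩

lemma isPolyomino_of_mem_connectedExtensions {v : Fin 2 → ℤ} {E P : Finset (Fin 2 → ℤ)} {n : ℕ}
    (hP : P ∈ connectedExtensions cellGraph {v} E n) : IsPolyomino (n + 1) P := by
  obtain ⟨-, -, hcard, hconn⟩ := hP
  rw [Finset.card_singleton, add_comm] at hcard
  exact ⟨hcard, connectedCells_iff_preconnected_induce.2 hconn⟩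

lemma IsPolyomino.exists_image_add_right_mem_connectedExtensions {n : ℕ}
    {P : Finset (Fin 2 → ℤ)} (hP : IsPolyomino (n + 1) P) :
    ∃ t, P.image (· + t) ∈ connectedExtensions cellGraph {0} {Pi.single 0 (-1)} n := by
  obtain ⟨hcard, hconn⟩ := hP
  have hnonempty : P.Nonempty := by rw [← Finset.card_pos]; omega
  obtain ⟨c, hc, hmin⟩ := P.exists_min_image (· 0) hnonempty
  refine ⟨-c, ?_, ?_, ?_, connectedCells_iff_preconnected_induce.1 (hconn.image_add_right (-c))⟩
  · exact Finset.singleton_subset_iff.2 (Finset.mem_image.2 ⟨c, hc, add_neg_cancel c⟩)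
  · rw [Finset.disjoint_singleton_right, Finset.mem_image]
    rintro ⟨a, ha, hac⟩
    have hleft : a 0 + -c 0 = -1 := by simpa using congrFun hac 0
    have := hmin a ha
    omega
  · rw [Finset.card_image_of_injective _ (add_left_injective (-c)), hcard,
      Finset.card_singleton, add_comm]

theorem polyominoCount_succ_le (n : ℕ) : polyominoCount (n + 1) ≤ (3 * (n + 1)).choose n := by
  have hroot : cellGraph.Adj 0 (Pi.single 0 (-1)) := ⟨0, .inl (by simp [Pi.single_neg])⟩
  obtain ⟨hfinite, hncard⟩ := Set.encard_le_coe_iff_finite_ncard_le.1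
    (encard_connectedExtensions_singleton_le cellGraph_degree_le hroot n)
  have := hfinite.to_subtype
  refine (Nat.card_le_card_of_surjective
    (fun P : connectedExtensions cellGraph {0} {Pi.single 0 (-1)} n ↦
      Quot.mk _ ⟨P.1, isPolyomino_of_mem_connectedExtensions P.2⟩) ?_).trans hncard
  rintro ⟨P, hP⟩
  obtain ⟨t, ht⟩ := hP.exists_image_add_right_mem_connectedExtensions
  exact ⟨⟨_, ht⟩, (Quot.sound ⟨t, rfl⟩).symm⟩

end SquareLattice

section GrowthRate

lemma choose_mul_pow_sub_le (N j k : ℕ) : N.choose j * k ^ (N - j) ≤ (k + 1) ^ N := by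
  obtain hj | hj := lt_or_ge N j
  · simp [Nat.choose_eq_zero_of_lt hj]
  calc N.choose j * k ^ (N - j) = 1 ^ j * k ^ (N - j) * N.choose j := by ring
    _ ≤ ∑ i ∈ Finset.range (N + 1), 1 ^ i * k ^ (N - i) * N.choose i :=
        Finset.single_le_sum (f := fun i ↦ 1 ^ i * k ^ (N - i) * N.choose i)
          (fun _ _ ↦ Nat.zero_le _) (Finset.mem_range_succ_iff.2 hj)
    _ = (k + 1) ^ N := by rw [add_comm k, add_pow]; norm_cast

lemma choose_succ_mul_mul_pow_le {k n j : ℕ} (hk : k ≠ 0) (hj : j ≤ n) :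
    ((k + 1) * n).choose j * (k ^ k) ^ n ≤ ((k + 1) ^ (k + 1)) ^ n := by
  have hexp : k * n ≤ (k + 1) * n - j := by rw [add_one_mul]; omega
  calc ((k + 1) * n).choose j * (k ^ k) ^ n
      ≤ ((k + 1) * n).choose j * k ^ ((k + 1) * n - j) := by
        rw [← pow_mul]
        gcongr
        omega
    _ ≤ ((k + 1) ^ (k + 1)) ^ n := by
        rw [← pow_mul]
        exact choose_mul_pow_sub_le _ _ _

lemma limsup_rpow_one_div_le {u : ℕ → ℝ} {c : ℝ} (hu : ∀ n, 0 ≤ u n) (hc : 0 ≤ c)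
    (huc : ∀ᶠ n in atTop, u n ≤ c ^ n) :
    limsup (fun n : ℕ ↦ u n ^ (1 / (n : ℝ))) atTop ≤ c := by
  refine limsup_le_of_le
    (isCoboundedUnder_le_of_le atTop (x := 0) fun n ↦ Real.rpow_nonneg (hu n) _) ?_
  filter_upwards [huc, eventually_ne_atTop 0] with n hn hn0
  calc u n ^ (1 / (n : ℝ)) ≤ (c ^ n) ^ (1 / (n : ℝ)) :=
        Real.rpow_le_rpow (hu n) hn (by positivity)
    _ = c := by rw [one_div, Real.pow_rpow_inv_natCast hc hn0]

end GrowthRate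

theorem polyomino_count_upper_bound :
    (∀ n : ℕ, 1 ≤ n → polyominoCount n ≤ (3 * n).choose (n - 1)) ∧
      limsup (fun n : ℕ => (polyominoCount n : ℝ) ^ (1 / (n : ℝ))) atTop ≤ 27 / 4 := by
  have hcount (n : ℕ) (hn : 1 ≤ n) : polyominoCount n ≤ (3 * n).choose (n - 1) := by
    obtain ⟨m, rfl⟩ := Nat.exists_eq_add_of_le' hn
    exact polyominoCount_succ_le m
  refine ⟨hcount, limsup_rpow_one_div_le (fun n ↦ Nat.cast_nonneg _) (by norm_num) ?_⟩
  filter_upwards [eventually_ge_atTop 1] with n hn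
  have hpow : polyominoCount n * 4 ^ n ≤ 27 ^ n :=
    calc polyominoCount n * 4 ^ n ≤ (3 * n).choose (n - 1) * 4 ^ n := by gcongr; exact hcount n hn
      _ ≤ 27 ^ n := choose_succ_mul_mul_pow_le two_ne_zero (n.sub_le 1)
  rw [div_pow, le_div_iff₀ (by positivity)]
  exact_mod_cast hpow
end
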